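/- arXiv:2505.14440 — 3 statements merged into one kernel-verified Lean document; each statement's English description precedes it below -/
import Mathlib

section
/- Let y ∈ 𝓔 = {y : E y ≤ 0}, and assume that for every y' ∈ 𝓔 the polytope P(y') equals the convex hull of V_1 y', …, V_v y' and V_j y' ∈ P(y') for every j. Assume X ⊆ ℝ^n and U ⊆ ℝ^m are convex, W is nonempty and compact, and d_k = sup{(F w)_k : w ∈ W}. Then P(y) is a feasible robust control invariant set (i.e., P(y) ⊆ X and P(y) ∈ F_reach(P(y))) if and only if there exists u = (u_1,…,u_v) ∈ (ℝ^m)^v with (y, u, y) ∈ S. -/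
/-!
A convex combination of inputs that work at some states works at the same combination of these
states, so the states that can be steered robustly into a convex set form a convex set. Hence a
polytope is robustly steered into a convex target as soon as its vertices are, and by convexity in
`(A, B)` only the generators of the uncertainty set matter. For a target `{x | F *ᵥ x ≤ y}` the
disturbance enters each inequality only through its worst case, the support vector `d`.
-/

open Matrix

theorem isLUB_pi_sSup_of_isCompact {κ α : Type*} [ConditionallyCompleteLinearOrder α]
    [TopologicalSpace α] [ClosedIciTopology α] {S : Set (κ → α)} (hS : IsCompact S)
    (hne : S.Nonempty) : IsLUB S fun k ↦ sSup (Function.eval k '' S) :=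
  isLUB_pi.2 fun k ↦ (hS.image (continuous_apply k)).isLUB_sSup (hne.image _)

/-- The polyhedron `P(y)` cut out by the rows of `F`, parametrized by its right-hand side `y`. -/
def polyhedron {𝕜 κ n : Type*} [Semiring 𝕜] [LE 𝕜] [Fintype n]
    (F : Matrix κ n 𝕜) (y : κ → 𝕜) : Set (n → 𝕜) :=
  {x | F *ᵥ x ≤ y}

/-- The states from which a single input in `U`, chosen before the system matrices in `Δ` and the
disturbance in `W` are revealed, forces the successor into `Z`. In the notation of the paper,
`Z⁺ ∈ F_reach(Z)` is `Z ⊆ robustPredecessor Δ U W Z⁺`. -/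
def robustPredecessor {𝕜 n m : Type*} [Semiring 𝕜] [Fintype n] [Fintype m]
    (Δ : Set (Matrix n n 𝕜 × Matrix n m 𝕜)) (U : Set (m → 𝕜)) (W Z : Set (n → 𝕜)) :
    Set (n → 𝕜) :=
  {x | ∃ u ∈ U, ∀ AB ∈ Δ, ∀ w ∈ W, AB.1 *ᵥ x + AB.2 *ᵥ u + w ∈ Z}

section Predecessor

variable {𝕜 n m : Type*} [CommSemiring 𝕜] [PartialOrder 𝕜] [Fintype n] [Fintype m]
  {U : Set (m → 𝕜)} {Z : Set (n → 𝕜)}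

theorem convex_setOf_stateInput_mulVec_add_mem (hZ : Convex 𝕜 Z)
    (AB : Matrix n n 𝕜 × Matrix n m 𝕜) (w : n → 𝕜) :
    Convex 𝕜 {xu : (n → 𝕜) × (m → 𝕜) | AB.1 *ᵥ xu.1 + AB.2 *ᵥ xu.2 + w ∈ Z} :=
  (hZ.translate_preimage_left w).linear_preimage (AB.1.mulVecLin.coprod AB.2.mulVecLin)

theorem convex_setOf_system_mulVec_add_mem (hZ : Convex 𝕜 Z) (x : n → 𝕜) (u : m → 𝕜)
    (w : n → 𝕜) :
    Convex 𝕜 {AB : Matrix n n 𝕜 × Matrix n m 𝕜 | AB.1 *ᵥ x + AB.2 *ᵥ u + w ∈ Z} :=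
  (hZ.translate_preimage_left w).linear_preimage
    (((mulVecBilin 𝕜 𝕜).flip x).coprod ((mulVecBilin 𝕜 𝕜).flip u))

theorem convex_robustPredecessor (hU : Convex 𝕜 U) (hZ : Convex 𝕜 Z)
    (Δ : Set (Matrix n n 𝕜 × Matrix n m 𝕜)) (W : Set (n → 𝕜)) :
    Convex 𝕜 (robustPredecessor Δ U W Z) := by
  rintro x₁ ⟨u₁, hu₁, h₁⟩ x₂ ⟨u₂, hu₂, h₂⟩ a b ha hb hab
  refine ⟨a • u₁ + b • u₂, hU hu₁ hu₂ ha hb hab, fun AB hAB w hw ↦ ?_⟩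
  have hcombo : a • (x₁, u₁) + b • (x₂, u₂) ∈
      {xu : (n → 𝕜) × (m → 𝕜) | AB.1 *ᵥ xu.1 + AB.2 *ᵥ xu.2 + w ∈ Z} :=
    convex_setOf_stateInput_mulVec_add_mem hZ AB w (h₁ AB hAB w hw) (h₂ AB hAB w hw) ha hb hab
  exact hcombo

theorem robustPredecessor_convexHull (hZ : Convex 𝕜 Z)
    (Δ : Set (Matrix n n 𝕜 × Matrix n m 𝕜)) (U : Set (m → 𝕜)) (W : Set (n → 𝕜)) :
    robustPredecessor (convexHull 𝕜 Δ) U W Z = robustPredecessor Δ U W Z := by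
  have forall_convexHull_iff (x : n → 𝕜) (u : m → 𝕜) :
      (∀ AB ∈ convexHull 𝕜 Δ, ∀ w ∈ W, AB.1 *ᵥ x + AB.2 *ᵥ u + w ∈ Z) ↔
        ∀ AB ∈ Δ, ∀ w ∈ W, AB.1 *ᵥ x + AB.2 *ᵥ u + w ∈ Z := by
    have hgood : Convex 𝕜 {AB : Matrix n n 𝕜 × Matrix n m 𝕜 |
        ∀ w ∈ W, AB.1 *ᵥ x + AB.2 *ᵥ u + w ∈ Z} := by
      simp only [Set.ofPred_forall]
      exact convex_iInter₂ fun w _ ↦ convex_setOf_system_mulVec_add_mem hZ x u w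
    exact hgood.convexHull_subset_iff
  simp only [robustPredecessor, forall_convexHull_iff]

end Predecessor

section Polyhedron

variable {𝕜 κ n m ρ : Type*} [CommRing 𝕜] [PartialOrder 𝕜] [IsOrderedRing 𝕜]
  [Fintype n] [Fintype m] {F : Matrix κ n 𝕜} {W : Set (n → 𝕜)} {d : κ → 𝕜}

theorem convex_polyhedron (F : Matrix κ n 𝕜) (y : κ → 𝕜) : Convex 𝕜 (polyhedron F y) :=
  (convex_Iic y).linear_preimage F.mulVecLin

theorem forall_add_mem_polyhedron_iff (hd : IsLUB ((F *ᵥ ·) '' W) d) {y : κ → 𝕜}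
    {x : n → 𝕜} : (∀ w ∈ W, x + w ∈ polyhedron F y) ↔ F *ᵥ x + d ≤ y := by
  simp only [polyhedron, Set.mem_ofPred_eq, mulVec_add, ← le_sub_iff_add_le', isLUB_le_iff hd,
    mem_upperBounds, Set.forall_mem_image]

theorem mem_robustPredecessor_polyhedron_iff (hd : IsLUB ((F *ᵥ ·) '' W) d) {y : κ → 𝕜}
    {U : Set (m → 𝕜)} {A : ρ → Matrix n n 𝕜} {B : ρ → Matrix n m 𝕜} {x : n → 𝕜} :
    x ∈ robustPredecessor (convexHull 𝕜 (Set.range fun i ↦ (A i, B i))) U W (polyhedron F y) ↔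
      ∃ u ∈ U, ∀ i, F *ᵥ (A i *ᵥ x + B i *ᵥ u) + d ≤ y := by
  rw [robustPredecessor_convexHull (convex_polyhedron F y)]
  simp only [robustPredecessor, Set.mem_ofPred_eq, Set.forall_mem_range,
    forall_add_mem_polyhedron_iff hd]

theorem statement3_general {ι : Type*} {X : Set (n → 𝕜)} (hX : Convex 𝕜 X)
    {U : Set (m → 𝕜)} (hU : Convex 𝕜 U) (hd : IsLUB ((F *ᵥ ·) '' W) d)
    (A : ρ → Matrix n n 𝕜) (B : ρ → Matrix n m 𝕜) {y : κ → 𝕜} (p : ι → n → 𝕜)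
    (hp : polyhedron F y = convexHull 𝕜 (Set.range p)) (y' : κ → 𝕜) :
    (polyhedron F y ⊆ X ∧ polyhedron F y ⊆
      robustPredecessor (convexHull 𝕜 (Set.range fun i ↦ (A i, B i))) U W (polyhedron F y')) ↔
    ∃ u : ι → m → 𝕜, (∀ j, p j ∈ X) ∧ (∀ j, u j ∈ U) ∧
      ∀ i j, F *ᵥ (A i *ᵥ p j + B i *ᵥ u j) + d ≤ y' := by
  rw [hp, hX.convexHull_subset_iff,
    (convex_robustPredecessor hU (convex_polyhedron F y') _ W).convexHull_subset_iff]
  simp only [Set.range_subset_iff, mem_robustPredecessor_polyhedron_iff hd, Classical.skolem,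
    forall_and, exists_and_left]
  simp only [forall_comm (α := ι)]

end Polyhedron

/-- Corollary 1: `P(y)` with `y ∈ 𝓔` is a feasible robust control invariant set
if and only if there exists a vertex input tuple `u` with `(y, u, y) ∈ 𝕊`. -/
theorem statement3
    {f n m r v e : ℕ}
    (F : Matrix (Fin f) (Fin n) ℝ)
    (E : Matrix (Fin e) (Fin f) ℝ)
    (V : Fin v → Matrix (Fin n) (Fin f) ℝ)
    (A : Fin r → Matrix (Fin n) (Fin n) ℝ)
    (B : Fin r → Matrix (Fin n) (Fin m) ℝ)
    (X : Set (Fin n → ℝ)) (hX : Convex ℝ X)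
    (U : Set (Fin m → ℝ)) (hU : Convex ℝ U)
    (W : Set (Fin n → ℝ)) (hWne : W.Nonempty) (hWcpt : IsCompact W)
    (d : Fin f → ℝ) (hd : ∀ k : Fin f, d k = sSup ((fun w => (F *ᵥ w) k) '' W))
    (hconv : ∀ y' : Fin f → ℝ, E *ᵥ y' ≤ 0 →
      {x : Fin n → ℝ | F *ᵥ x ≤ y'} =
        convexHull ℝ (Set.range fun j : Fin v => (V j) *ᵥ y'))
    (hver : ∀ (y' : Fin f → ℝ), E *ᵥ y' ≤ 0 → ∀ j : Fin v, F *ᵥ ((V j) *ᵥ y') ≤ y')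
    (y : Fin f → ℝ) (hy : E *ᵥ y ≤ 0) :
    -- P(y) is a feasible robust control invariant set
    ({x : Fin n → ℝ | F *ᵥ x ≤ y} ⊆ X ∧
      ∀ x : Fin n → ℝ, F *ᵥ x ≤ y →
        ∃ u ∈ U, ∀ AB ∈ convexHull ℝ (Set.range fun i : Fin r => (A i, B i)),
          ∀ w ∈ W, F *ᵥ (AB.1 *ᵥ x + AB.2 *ᵥ u + w) ≤ y)
    ↔
    -- there exists u with (y, u, y) ∈ 𝕊
    (∃ u : Fin v → Fin m → ℝ,
        E *ᵥ y ≤ 0 ∧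
        (∀ j : Fin v, (V j) *ᵥ y ∈ X) ∧
        (∀ j : Fin v, u j ∈ U) ∧
        ∀ (i : Fin r) (j : Fin v),
          F *ᵥ (A i *ᵥ ((V j) *ᵥ y) + B i *ᵥ (u j)) + d ≤ y) := by
  have hd' : IsLUB ((F *ᵥ ·) '' W) d := by
    simpa only [Set.image_image, Function.eval, id, ← hd] using isLUB_pi_sSup_of_isCompact
      (hWcpt.image (continuous_const.matrix_mulVec continuous_id)) (hWne.image (F *ᵥ ·))
  simpa only [hy, true_and] using! statement3_general hX hU hd' A B _ (hconv y hy) y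
end

section
/- Assume X ⊆ ℝ^n and U ⊆ ℝ^m are convex, W ⊆ ℝ^n satisfies F w ≤ d for all w ∈ W, γ ∈ (0,1), and (y_m, u_m, y_m) ∈ S. Let x ∈ ℝ^n and suppose (y_0,…,y_N, u_0,…,u_N) is feasible for the tube MPC problem at x, i.e., F x ≤ y_0, (y_k, u_k, y_{k+1}) ∈ S for k = 0,…,N−1, and (y_N, u_N, γ y_N + (1−γ) y_m) ∈ S. Let u ∈ U satisfy F(A_i x + B_i u) + d ≤ y_1 for all i ∈ {1,…,r}, and let x⁺ := A x + B u + w for some (A,B) ∈ Δ and w ∈ W. Then the shifted candidate (y_1,…,y_N, ŷ, u_1,…,u_N, û), with ŷ := γ y_N + (1−γ) y_m and û := γ u_N + (1−γ) u_m, is feasible for the tube MPC problem at x⁺: F x⁺ ≤ y_1, (y_k, u_k, y_{k+1}) ∈ S for k = 1,…,N−1, (y_N, u_N, ŷ) ∈ S, and (ŷ, û, γ ŷ + (1−γ) y_m) ∈ S. -/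
open Matrix

/-!
Robust invariance passes from the vertices of `Δ` to all of `Δ` because, for a fixed state and
input, the successor constraint is affine in `(A, B)`. The set `S` of admissible transitions is
itself convex, being cut out by convex constraints on linear images of the triple. The new terminal
transition is exactly `γ • (y N, u N, ŷ) + (1 - γ) • (ym, um, ym)`, a convex combination of the
old terminal transition and the stationary one, so it lies in `S`.
-/

section Convexity

open Set

theorem convex_setOf_linearMap_add_le {𝕜 G H : Type*} [Semiring 𝕜] [PartialOrder 𝕜]
    [AddCommMonoid G] [Module 𝕜 G]
    [AddCommMonoid H] [PartialOrder H] [IsOrderedAddMonoid H] [Module 𝕜 H] [PosSMulMono 𝕜 H]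
    (g h : G →ₗ[𝕜] H) (c : H) : Convex 𝕜 {x | g x + c ≤ h x} := by
  have hepi := ((g.convexOn convex_univ).add_const c).convex_epigraph.linear_preimage
    (LinearMap.id.prod h)
  simpa using hepi

theorem mulVecLin_prodMk_mem_convexHull_range {𝕜 k l m n ι : Type*} [CommSemiring 𝕜]
    [PartialOrder 𝕜] [Fintype l] [Fintype n]
    {A : ι → Matrix k l 𝕜} {B : ι → Matrix m n 𝕜} {AB : Matrix k l 𝕜 × Matrix m n 𝕜}
    (hAB : AB ∈ convexHull 𝕜 (range fun i => (A i, B i))) :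
    (AB.1.mulVecLin, AB.2.mulVecLin) ∈
      convexHull 𝕜 (range fun i => ((A i).mulVecLin, (B i).mulVecLin)) := by
  classical
  let L : Matrix k l 𝕜 × Matrix m n 𝕜 →ₗ[𝕜] ((l → 𝕜) →ₗ[𝕜] (k → 𝕜)) × ((n → 𝕜) →ₗ[𝕜] (m → 𝕜)) :=
    toLin'.toLinearMap.prodMap toLin'.toLinearMap
  have hL : L AB ∈ convexHull 𝕜 (L '' range fun i => (A i, B i)) := by
    rw [← L.image_convexHull]
    exact mem_image_of_mem L hAB
  rwa [← range_comp] at hL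

end Convexity

section TubeMPC

open Set

variable {𝕜 M N P Q ι κ : Type*} [CommSemiring 𝕜] [PartialOrder 𝕜]
  [AddCommMonoid M] [Module 𝕜 M] [AddCommMonoid N] [Module 𝕜 N]
  [AddCommMonoid P] [PartialOrder P] [Module 𝕜 P]
  [AddCommMonoid Q] [PartialOrder Q] [Module 𝕜 Q]

/-- The set `S` of admissible tube transitions `(y, u, y⁺)`, for states in `M`, inputs in `N` and
template parameters in `P`. The index `i : ι` runs over the vertices of the model uncertainty, and
`j : κ` over the vertices `V j y` of the tube section with parameter `y`. -/
def admissibleSet (F : M →ₗ[𝕜] P) (E : P →ₗ[𝕜] Q) (V : κ → P →ₗ[𝕜] M)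
    (A : ι → M →ₗ[𝕜] M) (B : ι → N →ₗ[𝕜] M) (d : P) (X : Set M) (U : Set N) :
    Set (P × (κ → N) × P) :=
  {p | E p.1 ≤ 0 ∧ (∀ j, V j p.1 ∈ X) ∧ (∀ j, p.2.1 j ∈ U) ∧
    ∀ i j, F (A i (V j p.1) + B i (p.2.1 j)) + d ≤ p.2.2}

variable [IsOrderedAddMonoid P] [PosSMulMono 𝕜 P]

theorem convex_admissibleSet [IsOrderedAddMonoid Q] [PosSMulMono 𝕜 Q]
    (F : M →ₗ[𝕜] P) (E : P →ₗ[𝕜] Q) (V : κ → P →ₗ[𝕜] M)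
    (A : ι → M →ₗ[𝕜] M) (B : ι → N →ₗ[𝕜] M) (d : P) {X : Set M} (hX : Convex 𝕜 X)
    {U : Set N} (hU : Convex 𝕜 U) : Convex 𝕜 (admissibleSet F E V A B d X U) := by
  let param : P × (κ → N) × P →ₗ[𝕜] P := LinearMap.fst 𝕜 _ _
  let input (j : κ) : P × (κ → N) × P →ₗ[𝕜] N :=
    LinearMap.proj j ∘ₗ LinearMap.fst 𝕜 _ _ ∘ₗ LinearMap.snd 𝕜 _ _
  let nextParam : P × (κ → N) × P →ₗ[𝕜] P := LinearMap.snd 𝕜 _ _ ∘ₗ LinearMap.snd 𝕜 _ _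
  have hconf : Convex 𝕜 {p | E (param p) ≤ 0} :=
    convex_halfSpace_le (E ∘ₗ param).isLinear 0
  have hstate (j : κ) : Convex 𝕜 {p | V j (param p) ∈ X} :=
    hX.linear_preimage (V j ∘ₗ param)
  have hinput (j : κ) : Convex 𝕜 {p | input j p ∈ U} := hU.linear_preimage (input j)
  have hsucc (i : ι) (j : κ) : Convex 𝕜
      {p | F (A i (V j (param p)) + B i (input j p)) + d ≤ nextParam p} :=
    convex_setOf_linearMap_add_le
      (F ∘ₗ (A i ∘ₗ V j ∘ₗ param + B i ∘ₗ input j)) nextParam d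
  simp only [admissibleSet, ofPred_and, ofPred_forall]
  exact hconf.inter <| (convex_iInter hstate).inter <| (convex_iInter hinput).inter <|
    convex_iInter₂ hsucc

theorem map_successor_add_le_of_mem_convexHull (F : M →ₗ[𝕜] P) {d y : P} {x : M} {u : N}
    {Δ : Set ((M →ₗ[𝕜] M) × (N →ₗ[𝕜] M))} (hΔ : ∀ AB ∈ Δ, F (AB.1 x + AB.2 u) + d ≤ y)
    {AB : (M →ₗ[𝕜] M) × (N →ₗ[𝕜] M)} (hAB : AB ∈ convexHull 𝕜 Δ) :
    F (AB.1 x + AB.2 u) + d ≤ y := by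
  let successor : (M →ₗ[𝕜] M) × (N →ₗ[𝕜] M) →ₗ[𝕜] M :=
    (LinearMap.applyₗ x).coprod (LinearMap.applyₗ u)
  have hconv : Convex 𝕜 {AB' | F (successor AB') + d ≤ y} := by
    simpa using (((F ∘ₗ successor).convexOn convex_univ).add_const d).convex_le y
  exact convexHull_min hΔ hconv hAB

end TubeMPC

theorem statement6_general {𝕜 M N P Q ι κ : Type*} [CommRing 𝕜] [PartialOrder 𝕜]
    [IsOrderedAddMonoid 𝕜] [AddCommMonoid M] [Module 𝕜 M] [AddCommMonoid N] [Module 𝕜 N]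
    [AddCommMonoid P] [PartialOrder P] [IsOrderedAddMonoid P] [Module 𝕜 P] [PosSMulMono 𝕜 P]
    [AddCommMonoid Q] [PartialOrder Q] [IsOrderedAddMonoid Q] [Module 𝕜 Q] [PosSMulMono 𝕜 Q]
    (F : M →ₗ[𝕜] P) (E : P →ₗ[𝕜] Q) (V : κ → P →ₗ[𝕜] M)
    (A : ι → M →ₗ[𝕜] M) (B : ι → N →ₗ[𝕜] M) (d : P)
    {X : Set M} (hX : Convex 𝕜 X) {U : Set N} (hU : Convex 𝕜 U)
    {S : Set (P × (κ → N) × P)} (hS : S = admissibleSet F E V A B d X U)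
    {γ : 𝕜} (hγ0 : 0 ≤ γ) (hγ1 : γ ≤ 1) {ym : P} {um : κ → N} (hm : (ym, um, ym) ∈ S)
    {T : ℕ} {y : ℕ → P} {u : ℕ → κ → N}
    (hstep : ∀ k < T, (y k, u k, y (k + 1)) ∈ S)
    (hterm : (y T, u T, γ • y T + (1 - γ) • ym) ∈ S)
    {x : M} {uin : N} (hux : ∀ i, F (A i x + B i uin) + d ≤ y 1)
    {AB : (M →ₗ[𝕜] M) × (N →ₗ[𝕜] M)}
    (hAB : AB ∈ convexHull 𝕜 (Set.range fun i => (A i, B i)))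
    {w : M} (hw : F w ≤ d) :
    F (AB.1 x + AB.2 uin + w) ≤ y 1 ∧
    (∀ k, 1 ≤ k → k < T → (y k, u k, y (k + 1)) ∈ S) ∧
    (y T, u T, γ • y T + (1 - γ) • ym) ∈ S ∧
    (γ • y T + (1 - γ) • ym,
     γ • u T + (1 - γ) • um,
     γ • (γ • y T + (1 - γ) • ym) + (1 - γ) • ym) ∈ S := by
  have hSconv : Convex 𝕜 S := hS ▸ convex_admissibleSet F E V A B d hX hU
  have hinit : F (AB.1 x + AB.2 uin + w) ≤ y 1 :=
    calc
      F (AB.1 x + AB.2 uin + w) = F (AB.1 x + AB.2 uin) + F w := map_add F _ _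
      _ ≤ F (AB.1 x + AB.2 uin) + d := by gcongr
      _ ≤ y 1 := map_successor_add_le_of_mem_convexHull F (Set.forall_mem_range.2 hux) hAB
  exact ⟨hinit, fun k _ hk => hstep k hk, hterm,
    hSconv hterm hm hγ0 (sub_nonneg.2 hγ1) (add_sub_cancel γ 1)⟩

/-- recursive feasibility of the CCTMPC scheme — the shifted candidate solution is
feasible at the successor state `x⁺ = A x + B u + w`. -/
theorem statement6
    {f n m r v e : ℕ}
    (F : Matrix (Fin f) (Fin n) ℝ)
    (E : Matrix (Fin e) (Fin f) ℝ)
    (V : Fin v → Matrix (Fin n) (Fin f) ℝ)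
    (A : Fin r → Matrix (Fin n) (Fin n) ℝ)
    (B : Fin r → Matrix (Fin n) (Fin m) ℝ)
    (d : Fin f → ℝ)
    (X : Set (Fin n → ℝ)) (hX : Convex ℝ X)
    (U : Set (Fin m → ℝ)) (hU : Convex ℝ U)
    (W : Set (Fin n → ℝ)) (hW : ∀ w ∈ W, F *ᵥ w ≤ d)
    (S : Set ((Fin f → ℝ) × (Fin v → Fin m → ℝ) × (Fin f → ℝ)))
    (hSdef : S = {p : (Fin f → ℝ) × (Fin v → Fin m → ℝ) × (Fin f → ℝ) |
      E *ᵥ p.1 ≤ 0 ∧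
      (∀ j : Fin v, (V j) *ᵥ p.1 ∈ X) ∧
      (∀ j : Fin v, p.2.1 j ∈ U) ∧
      ∀ (i : Fin r) (j : Fin v),
        F *ᵥ (A i *ᵥ ((V j) *ᵥ p.1) + B i *ᵥ (p.2.1 j)) + d ≤ p.2.2})
    (γ : ℝ) (hγ0 : 0 < γ) (hγ1 : γ < 1)
    (ym : Fin f → ℝ) (um : Fin v → Fin m → ℝ)
    (hm : (ym, um, ym) ∈ S)
    (N : ℕ) (hN : 1 ≤ N)
    (x : Fin n → ℝ)
    (y : ℕ → Fin f → ℝ) (u : ℕ → Fin v → Fin m → ℝ)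
    -- feasibility of (y_0,…,y_N, u_0,…,u_N) at x
    (hx0 : F *ᵥ x ≤ y 0)
    (hstep : ∀ k < N, (y k, u k, y (k + 1)) ∈ S)
    (hterm : (y N, u N, γ • y N + (1 - γ) • ym) ∈ S)
    -- the applied input and the successor state
    (uin : Fin m → ℝ) (huin : uin ∈ U)
    (hux : ∀ i : Fin r, F *ᵥ (A i *ᵥ x + B i *ᵥ uin) + d ≤ y 1)
    (AB : Matrix (Fin n) (Fin n) ℝ × Matrix (Fin n) (Fin m) ℝ)
    (hAB : AB ∈ convexHull ℝ (Set.range fun i : Fin r => (A i, B i)))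
    (w : Fin n → ℝ) (hw : w ∈ W)
    (xplus : Fin n → ℝ) (hxplus : xplus = AB.1 *ᵥ x + AB.2 *ᵥ uin + w) :
    -- the shifted candidate is feasible at x⁺
    F *ᵥ xplus ≤ y 1 ∧
    (∀ k, 1 ≤ k → k < N → (y k, u k, y (k + 1)) ∈ S) ∧
    (y N, u N, γ • y N + (1 - γ) • ym) ∈ S ∧
    (γ • y N + (1 - γ) • ym,
     γ • u N + (1 - γ) • um,
     γ • (γ • y N + (1 - γ) • ym) + (1 - γ) • ym) ∈ S := by
  subst hxplus
  exact statement6_general F.mulVecLin E.mulVecLin (fun j => (V j).mulVecLin)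
    (fun i => (A i).mulVecLin) (fun i => (B i).mulVecLin) d hX hU hSdef hγ0.le hγ1.le hm hstep
    hterm hux (mulVecLin_prodMk_mem_convexHull_range hAB) (hW w hw)
end

section
/- Let T be an invertible real n×n matrix, let W = convexHull{w_1,…,w_s} ⊆ ℝ^n, let Δ = convexHull{(A_1,B_1),…,(A_r,B_r)}, and let X ⊆ ℝ^n and U ⊆ ℝ^m be convex sets. Let z_1,…,z_v ∈ ℝ^n be such that {x : F x ≤ 1} = convexHull{z_1,…,z_v}, where 1 denotes the all-ones vector in ℝ^f. Suppose there exist u_1,…,u_v ∈ ℝ^m such that for all i ∈ {1,…,r}, j ∈ {1,…,v}, k ∈ {1,…,s}: F T⁻¹(A_i T z_j + B_i u_j + w_k) ≤ 1, T z_j ∈ X, and u_j ∈ U. Then the polytope P_T := {x : F T⁻¹ x ≤ 1} satisfies P_T = convexHull{T z_1,…,T z_v} ⊆ X, and P_T is robust control invariant: for every x ∈ P_T there exists u ∈ U such that A x + B u + w ∈ P_T for every (A,B) ∈ Δ and every w ∈ W. -/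
open Matrix

/-!
Membership of the successor `A x + B u + w` in a convex set `P` is affine in each of `(A, B)`,
`(x, u)` and `w`, so it passes from generators to convex hulls one argument at a time. For this to
apply, a state `x` in the hull of the vertices must come with the input having the same convex
weights as `x`: such an input exists because the hull of the pairs `(vertex, input)` projects onto
the hull of the vertices.
-/

section ConvexHull

variable {𝕜 E₁ E₂ G ι : Type*} [PartialOrder 𝕜] [AddCommMonoid E₁] [AddCommMonoid E₂]
  [AddCommMonoid G]

theorem mapsTo_convexHull_linearMap_add_const [Semiring 𝕜] [Module 𝕜 E₁] [Module 𝕜 G] {P : Set G}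
    (hP : Convex 𝕜 P) (L : E₁ →ₗ[𝕜] G) (c : G) {S : Set E₁}
    (hS : Set.MapsTo (fun p => L p + c) S P) :
    Set.MapsTo (fun p => L p + c) (convexHull 𝕜 S) P :=
  convexHull_min hS ((hP.translate_preimage_left c).linear_preimage L)

theorem bilin_add_mem_of_mem_convexHull [CommSemiring 𝕜] [Module 𝕜 E₁] [Module 𝕜 E₂] [Module 𝕜 G]
    {P : Set G} (hP : Convex 𝕜 P) (L : E₁ →ₗ[𝕜] E₂ →ₗ[𝕜] G) {S₁ : Set E₁} {S₂ : Set E₂} {W : Set G}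
    (hL : ∀ d ∈ S₁, ∀ p ∈ S₂, ∀ w ∈ W, L d p + w ∈ P) {d : E₁} (hd : d ∈ convexHull 𝕜 S₁)
    {p : E₂} (hp : p ∈ convexHull 𝕜 S₂) {w : G} (hw : w ∈ convexHull 𝕜 W) :
    L d p + w ∈ P := by
  have mem_of_mem_generators : ∀ d ∈ S₁, ∀ w ∈ W, L d p + w ∈ P := fun d hd w hw =>
    mapsTo_convexHull_linearMap_add_const hP (L d) w (fun p hp => hL d hd p hp w hw) hp
  have mem_of_mem_disturbances : ∀ w ∈ W, L d p + w ∈ P := fun w hw =>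
    mapsTo_convexHull_linearMap_add_const hP (L.flip p) w
      (fun d hd => mem_of_mem_generators d hd w hw) hd
  exact convexHull_min mem_of_mem_disturbances (hP.translate_preimage_right (L d p)) hw

theorem exists_prodMk_mem_convexHull_range [Semiring 𝕜] [Module 𝕜 E₁] [Module 𝕜 E₂] {x : ι → E₁}
    {y : ι → E₂} {a : E₁} (ha : a ∈ convexHull 𝕜 (Set.range x)) :
    ∃ b, (a, b) ∈ convexHull 𝕜 (Set.range fun j => (x j, y j)) := by
  have range_eq_fst_image : Set.range x = LinearMap.fst 𝕜 E₁ E₂ '' Set.range fun j => (x j, y j) :=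
    Set.range_comp (LinearMap.fst 𝕜 E₁ E₂) fun j => (x j, y j)
  rw [range_eq_fst_image, ← LinearMap.image_convexHull] at ha
  obtain ⟨⟨_, b⟩, hab, rfl⟩ := ha
  exact ⟨b, hab⟩

end ConvexHull

section Template

variable {𝕜 f n : Type*} [CommRing 𝕜] [Fintype n] [DecidableEq n] {T : Matrix n n 𝕜}

theorem setOf_mul_nonsing_inv_mulVec_le_eq_image [LE 𝕜] (hT : IsUnit T.det) (F : Matrix f n 𝕜)
    (b : f → 𝕜) :
    {x | (F * T⁻¹) *ᵥ x ≤ b} = T.mulVecLin '' {x | F *ᵥ x ≤ b} := by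
  have left_inverse : Function.LeftInverse (T⁻¹).mulVecLin T.mulVecLin := fun x => by
    simp [nonsing_inv_mul T hT]
  have right_inverse : Function.RightInverse (T⁻¹).mulVecLin T.mulVecLin := fun x => by
    simp [mul_nonsing_inv T hT]
  rw [Set.image_eq_preimage_of_inverse left_inverse right_inverse]
  ext x
  simp

theorem setOf_mul_nonsing_inv_mulVec_le_eq_convexHull [PartialOrder 𝕜] {ι : Type*}
    (hT : IsUnit T.det) {F : Matrix f n 𝕜} {b : f → 𝕜} {z : ι → n → 𝕜}
    (hz : {x | F *ᵥ x ≤ b} = convexHull 𝕜 (Set.range z)) :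
    {x | (F * T⁻¹) *ᵥ x ≤ b} = convexHull 𝕜 (Set.range fun j => T *ᵥ z j) := by
  rw [setOf_mul_nonsing_inv_mulVec_le_eq_image hT, hz, LinearMap.image_convexHull, ← Set.range_comp]
  rfl

end Template

section RobustControlInvariance

variable {𝕜 n m : Type*} [Fintype n] [Fintype m]

/-- `Z` is robust control invariant for `x⁺ = A x + B u + w` with `(A, B) ∈ D`, `u ∈ U`, `w ∈ W`:
the input `u` may depend on the state `x`, but neither on the realized system `(A, B)` nor on the
disturbance `w`. The state constraint `Z ⊆ X` is not part of the definition. -/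
def IsRobustControlInvariant [NonUnitalNonAssocSemiring 𝕜]
    (D : Set (Matrix n n 𝕜 × Matrix n m 𝕜)) (U : Set (m → 𝕜)) (W Z : Set (n → 𝕜)) : Prop :=
  ∀ x ∈ Z, ∃ u ∈ U, ∀ AB ∈ D, ∀ w ∈ W, AB.1 *ᵥ x + AB.2 *ᵥ u + w ∈ Z

/-- The disturbance-free successor `A x + B u` as a bilinear map in the system `(A, B)` and the
state-input pair `(x, u)`. -/
def successorBilin (𝕜 n m : Type*) [Fintype n] [Fintype m] [CommSemiring 𝕜] :
    (Matrix n n 𝕜 × Matrix n m 𝕜) →ₗ[𝕜] (n → 𝕜) × (m → 𝕜) →ₗ[𝕜] n → 𝕜 :=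
  (mulVecBilin 𝕜 𝕜).compl₁₂ (.fst ..) (.fst ..) + (mulVecBilin 𝕜 𝕜).compl₁₂ (.snd ..) (.snd ..)

theorem isRobustControlInvariant_convexHull_range [CommSemiring 𝕜] [PartialOrder 𝕜] {ι : Type*}
    {D : Set (Matrix n n 𝕜 × Matrix n m 𝕜)} {U : Set (m → 𝕜)} {W : Set (n → 𝕜)}
    (hU : Convex 𝕜 U) {x : ι → n → 𝕜} {u : ι → m → 𝕜} (hu : ∀ j, u j ∈ U)
    (hstep : ∀ AB ∈ D, ∀ j, ∀ w ∈ W,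
      AB.1 *ᵥ x j + AB.2 *ᵥ u j + w ∈ convexHull 𝕜 (Set.range x)) :
    IsRobustControlInvariant (convexHull 𝕜 D) U (convexHull 𝕜 W)
      (convexHull 𝕜 (Set.range x)) := by
  intro a ha
  obtain ⟨b, hab⟩ := exists_prodMk_mem_convexHull_range (y := u) ha
  have hull_subset : convexHull 𝕜 (Set.range fun j => (x j, u j)) ⊆ LinearMap.snd 𝕜 _ _ ⁻¹' U :=
    convexHull_min (Set.range_subset_iff.2 hu) (hU.linear_preimage _)
  refine ⟨b, hull_subset hab, fun AB hAB w hw => ?_⟩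
  exact bilin_add_mem_of_mem_convexHull (convex_convexHull 𝕜 _) (successorBilin 𝕜 n m)
    (fun AB hAB => Set.forall_mem_range.2 (hstep AB hAB)) hAB hab hw

end RobustControlInvariance

theorem statement15_general {𝕜 f n m ι : Type*} [CommRing 𝕜] [PartialOrder 𝕜] [Fintype n]
    [DecidableEq n] [Fintype m] {F : Matrix f n 𝕜} {b : f → 𝕜} {T : Matrix n n 𝕜}
    (hT : IsUnit T.det) {D : Set (Matrix n n 𝕜 × Matrix n m 𝕜)} {W : Set (n → 𝕜)}
    {X : Set (n → 𝕜)} (hX : Convex 𝕜 X) {U : Set (m → 𝕜)} (hU : Convex 𝕜 U) {z : ι → n → 𝕜}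
    (hz : {x | F *ᵥ x ≤ b} = convexHull 𝕜 (Set.range z)) {u : ι → m → 𝕜}
    (hstep : ∀ AB ∈ D, ∀ j, ∀ w ∈ W,
      (F * T⁻¹) *ᵥ (AB.1 *ᵥ (T *ᵥ z j) + AB.2 *ᵥ u j + w) ≤ b)
    (hzX : ∀ j, T *ᵥ z j ∈ X) (huU : ∀ j, u j ∈ U) :
    {x | (F * T⁻¹) *ᵥ x ≤ b} = convexHull 𝕜 (Set.range fun j => T *ᵥ z j) ∧
    {x | (F * T⁻¹) *ᵥ x ≤ b} ⊆ X ∧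
    IsRobustControlInvariant (convexHull 𝕜 D) U (convexHull 𝕜 W)
      {x | (F * T⁻¹) *ᵥ x ≤ b} := by
  have hull_eq := setOf_mul_nonsing_inv_mulVec_le_eq_convexHull hT hz
  refine ⟨hull_eq, ?_, ?_⟩
  · rw [hull_eq]
    exact convexHull_min (Set.range_subset_iff.2 hzX) hX
  · rw [hull_eq]
    exact isRobustControlInvariant_convexHull_range hU huU fun AB hAB j w hw =>
      hull_eq.subset (hstep AB hAB j w hw)

/-- correctness of the NLP-based template initialization — if the transformed
vertex inequalities hold, then `P_T = {x : F T⁻¹ x ≤ 1}` equals `convexHull {T z_1, …, T z_v}`,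
is contained in `X`, and is robust control invariant. -/
theorem statement15
    {f n m r v s : ℕ}
    (F : Matrix (Fin f) (Fin n) ℝ)
    (T : Matrix (Fin n) (Fin n) ℝ) (hT : IsUnit T.det)
    (A : Fin r → Matrix (Fin n) (Fin n) ℝ)
    (B : Fin r → Matrix (Fin n) (Fin m) ℝ)
    (w : Fin s → Fin n → ℝ)
    (X : Set (Fin n → ℝ)) (hX : Convex ℝ X)
    (U : Set (Fin m → ℝ)) (hU : Convex ℝ U)
    (z : Fin v → Fin n → ℝ)
    (hP : {x : Fin n → ℝ | F *ᵥ x ≤ 1} = convexHull ℝ (Set.range z))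
    (u : Fin v → Fin m → ℝ)
    (hstep : ∀ (i : Fin r) (j : Fin v) (k : Fin s),
      (F * T⁻¹) *ᵥ (A i *ᵥ (T *ᵥ z j) + B i *ᵥ u j + w k) ≤ 1)
    (hzX : ∀ j : Fin v, T *ᵥ z j ∈ X)
    (huU : ∀ j : Fin v, u j ∈ U) :
    {x : Fin n → ℝ | (F * T⁻¹) *ᵥ x ≤ 1}
        = convexHull ℝ (Set.range fun j : Fin v => T *ᵥ z j) ∧
    {x : Fin n → ℝ | (F * T⁻¹) *ᵥ x ≤ 1} ⊆ X ∧
    ∀ x ∈ {x : Fin n → ℝ | (F * T⁻¹) *ᵥ x ≤ 1},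
      ∃ u' ∈ U, ∀ AB ∈ convexHull ℝ (Set.range fun i : Fin r => (A i, B i)),
        ∀ ww ∈ convexHull ℝ (Set.range w),
          (F * T⁻¹) *ᵥ (AB.1 *ᵥ x + AB.2 *ᵥ u' + ww) ≤ 1 := by
  refine statement15_general hT hX hU hP ?_ hzX huU
  rintro _ ⟨i, rfl⟩ j _ ⟨k, rfl⟩
  exact hstep i j k
end
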